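/- arXiv:2409.14025 — 3 statements merged into one kernel-verified Lean document; each statement's English description precedes it below -/
import Mathlib

section
/- (Monotonicity along geodesics, inequality (2.5)) Under the hypotheses of the characteristic system: let U ⊆ {(r,φ,z) : r > 0} be open, n : U → ℝ a C¹ function with n > 0 and ∂_r n ≥ 0 on U, τ : U → ℝ a C² solution of (∂_r τ)² + (1/r²)(∂_φ τ)² + (∂_z τ)² = n², and γ(s) = (r(s),φ(s),z(s)) a C¹ curve in U on an interval I satisfying r' = (∂_r τ ∘ γ)/ (n∘γ)², φ' = (∂_φ τ ∘ γ)/(r² (n∘γ)²), z' = (∂_z τ ∘ γ)/(n∘γ)². Then the function q₁(s) = (∂_r τ)(γ(s)) satisfies q₁'(s) ≥ 0 on I; in particular q₁ is nondecreasing, so q₁(s) ≥ q₁(s₀) for all s ≥ s₀ in I. -/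
open Real

/-- Partial derivative in the first (radial) cylindrical coordinate `r`. -/
noncomputable def pdr (f : ℝ × ℝ × ℝ → ℝ) (p : ℝ × ℝ × ℝ) : ℝ :=
  deriv (fun t => f (t, p.2.1, p.2.2)) p.1

/-- Partial derivative in the second (angular) cylindrical coordinate `φ`. -/
noncomputable def pdφ (f : ℝ × ℝ × ℝ → ℝ) (p : ℝ × ℝ × ℝ) : ℝ :=
  deriv (fun t => f (p.1, t, p.2.2)) p.2.1

/-- Partial derivative in the third (vertical) cylindrical coordinate `z`. -/
noncomputable def pdz (f : ℝ × ℝ × ℝ → ℝ) (p : ℝ × ℝ × ℝ) : ℝ :=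
  deriv (fun t => f (p.1, p.2.1, t)) p.2.2

/-- Partial derivatives as values of the Fréchet derivative. -/
theorem pd_of_differentiableAt (f : ℝ × ℝ × ℝ → ℝ) (p : ℝ × ℝ × ℝ)
    (h : DifferentiableAt ℝ f p) :
    HasDerivAt (fun t => f (t, p.2.1, p.2.2)) (fderiv ℝ f p (1, 0, 0)) p.1 ∧
    pdr f p = fderiv ℝ f p (1, 0, 0) ∧ pdφ f p = fderiv ℝ f p (0, 1, 0) ∧
    pdz f p = fderiv ℝ f p (0, 0, 1) := by
  have h1 : HasDerivAt (fun t => f (t, p.2.1, p.2.2)) (fderiv ℝ f p (1, 0, 0)) p.1 := by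
    have hc : HasDerivAt (fun t : ℝ => ((t, p.2.1, p.2.2) : ℝ × ℝ × ℝ)) (1, 0, 0) p.1 :=
      (hasDerivAt_id p.1).prodMk ((hasDerivAt_const _ _).prodMk (hasDerivAt_const _ _))
    exact HasFDerivAt.comp_hasDerivAt (f := fun t : ℝ => ((t, p.2.1, p.2.2) : ℝ × ℝ × ℝ))
      p.1 h.hasFDerivAt hc
  have h2 : HasDerivAt (fun t => f (p.1, t, p.2.2)) (fderiv ℝ f p (0, 1, 0)) p.2.1 := by
    have hc : HasDerivAt (fun t : ℝ => ((p.1, t, p.2.2) : ℝ × ℝ × ℝ)) (0, 1, 0) p.2.1 :=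
      (hasDerivAt_const _ _).prodMk ((hasDerivAt_id p.2.1).prodMk (hasDerivAt_const _ _))
    exact HasFDerivAt.comp_hasDerivAt (f := fun t : ℝ => ((p.1, t, p.2.2) : ℝ × ℝ × ℝ))
      p.2.1 h.hasFDerivAt hc
  have h3 : HasDerivAt (fun t => f (p.1, p.2.1, t)) (fderiv ℝ f p (0, 0, 1)) p.2.2 := by
    have hc : HasDerivAt (fun t : ℝ => ((p.1, p.2.1, t) : ℝ × ℝ × ℝ)) (0, 0, 1) p.2.2 :=
      (hasDerivAt_const _ _).prodMk ((hasDerivAt_const _ _).prodMk (hasDerivAt_id p.2.2))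
    exact HasFDerivAt.comp_hasDerivAt (f := fun t : ℝ => ((p.1, p.2.1, t) : ℝ × ℝ × ℝ))
      p.2.2 h.hasFDerivAt hc
  exact ⟨h1, h1.deriv, h2.deriv, h3.deriv⟩

/-- Derivative of a directional derivative along a curve. -/
theorem hasDerivAt_dir (D : ℝ × ℝ × ℝ → ℝ × ℝ × ℝ →L[ℝ] ℝ)
    (D2 : ℝ × ℝ × ℝ →L[ℝ] ℝ × ℝ × ℝ →L[ℝ] ℝ) (g : ℝ → ℝ × ℝ × ℝ) (g' : ℝ × ℝ × ℝ) (s : ℝ)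
    (hD : HasFDerivAt D D2 (g s)) (hg : HasDerivAt g g' s) (v : ℝ × ℝ × ℝ) :
    HasDerivAt (fun t => D (g t) v) (D2 g' v) s := by
  have h := (hD.comp_hasDerivAt s hg).clm_apply (hasDerivAt_const s v)
  simpa using h

/-- **Monotonicity along geodesics (inequality (2.5)).**
Under the hypotheses of the characteristic system, if in addition `∂_r n ≥ 0` on `U`,
then `q₁(s) = (∂_r τ)(γ(s))` satisfies `q₁'(s) ≥ 0` on `I`; in particular `q₁` is
nondecreasing on `I`. -/
theorem monotonicity_along_geodesics
    (U : Set (ℝ × ℝ × ℝ)) (hU : IsOpen U) (hUr : ∀ p ∈ U, 0 < p.1)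
    (n τ : ℝ × ℝ × ℝ → ℝ)
    (hn : ContDiffOn ℝ 1 n U) (hnpos : ∀ p ∈ U, 0 < n p)
    (hnr : ∀ p ∈ U, 0 ≤ pdr n p)
    (hτ : ContDiffOn ℝ 2 τ U)
    (heik : ∀ p ∈ U,
      (pdr τ p) ^ 2 + (1 / p.1 ^ 2) * (pdφ τ p) ^ 2 + (pdz τ p) ^ 2 = (n p) ^ 2)
    (I : Set ℝ) (hI : I.OrdConnected)
    (rr pp zz : ℝ → ℝ)
    (hγ : ∀ s ∈ I, (rr s, pp s, zz s) ∈ U)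
    (hr' : ∀ s ∈ I,
      HasDerivAt rr (pdr τ (rr s, pp s, zz s) / (n (rr s, pp s, zz s)) ^ 2) s)
    (hp' : ∀ s ∈ I,
      HasDerivAt pp (pdφ τ (rr s, pp s, zz s) / ((rr s) ^ 2 * (n (rr s, pp s, zz s)) ^ 2)) s)
    (hz' : ∀ s ∈ I,
      HasDerivAt zz (pdz τ (rr s, pp s, zz s) / (n (rr s, pp s, zz s)) ^ 2) s) :
    (∀ s ∈ I, 0 ≤ deriv (fun t => pdr τ (rr t, pp t, zz t)) s)
    ∧ ∀ s₀ ∈ I, ∀ s ∈ I, s₀ ≤ s →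
        pdr τ (rr s₀, pp s₀, zz s₀) ≤ pdr τ (rr s, pp s, zz s) := by
  have hτd : ∀ p ∈ U, DifferentiableAt ℝ τ p := fun p hp =>
    (hτ.contDiffAt (hU.mem_nhds hp)).differentiableAt (by norm_num)
  have hnd : ∀ p ∈ U, DifferentiableAt ℝ n p := fun p hp =>
    (hn.contDiffAt (hU.mem_nhds hp)).differentiableAt (by norm_num)
  have hDd : ∀ p ∈ U, HasFDerivAt (fderiv ℝ τ) (fderiv ℝ (fderiv ℝ τ) p) p := fun p hp =>
    (((hτ.contDiffAt (hU.mem_nhds hp)).fderiv_right (m := 1) (by norm_num)).differentiableAt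
      (by norm_num)).hasFDerivAt
  have key : ∀ s ∈ I, ∃ d : ℝ, 0 ≤ d ∧ HasDerivAt (fun t => pdr τ (rr t, pp t, zz t)) d s := by
    intro s hs
    have hpU := hγ s hs
    have h1 := hr' s hs
    have h2 := hp' s hs
    have h3 := hz' s hs
    have hγd := h1.prodMk (h2.prodMk h3)
    have hev : ∀ᶠ t in nhds s, (rr t, pp t, zz t) ∈ U :=
      hγd.continuousAt.eventually_mem (hU.mem_nhds hpU)
    generalize hp : (rr s, pp s, zz s) = p at *
    have hr : rr s = p.1 := by rw [← hp]
    rw [hr] at hγd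
    set D2 := fderiv ℝ (fderiv ℝ τ) p with hD2
    have hsym : ∀ v w, D2 v w = D2 w v := by
      have := (hτ.contDiffAt (hU.mem_nhds hpU)).isSymmSndFDerivAt (by simp)
      exact fun v w => this v w
    have hq := hasDerivAt_dir (fderiv ℝ τ) D2 (fun t => (rr t, pp t, zz t)) _ s
      (by simpa only [hp] using hDd p hpU) hγd (1, 0, 0)
    have hq' := hq.congr_of_eventuallyEq (f₁ := fun t => pdr τ (rr t, pp t, zz t)) (by
      filter_upwards [hev] with t ht
      exact (pd_of_differentiableAt τ _ (hτd _ ht)).2.1)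
    refine ⟨_, ?_, hq'⟩
    have hc : HasDerivAt (fun t : ℝ => ((t, p.2.1, p.2.2) : ℝ × ℝ × ℝ)) (1, 0, 0) p.1 :=
      (hasDerivAt_id p.1).prodMk ((hasDerivAt_const _ _).prodMk (hasDerivAt_const _ _))
    have hev2 : ∀ᶠ t in nhds p.1, ((t, p.2.1, p.2.2) : ℝ × ℝ × ℝ) ∈ U :=
      hc.continuousAt.eventually_mem (hU.mem_nhds hpU)
    have hline : ∀ v : ℝ × ℝ × ℝ,
        HasDerivAt (fun t => fderiv ℝ τ (t, p.2.1, p.2.2) v) (D2 (1, 0, 0) v) p.1 := fun v =>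
      hasDerivAt_dir (fderiv ℝ τ) D2 (fun t : ℝ => ((t, p.2.1, p.2.2) : ℝ × ℝ × ℝ)) _ p.1
        (hDd p hpU) hc v
    have hr0 : 0 < p.1 := hUr p hpU
    have hn0 := hnpos p hpU
    have hnr0 := hnr p hpU
    obtain ⟨hnl, hnre, -, -⟩ := pd_of_differentiableAt n p (hnd p hpU)
    obtain ⟨-, e1, e2, e3⟩ := pd_of_differentiableAt τ p (hτd p hpU)
    have hL := (((hline (1, 0, 0)).pow 2).add ((((hasDerivAt_id p.1).pow 2).inv
      (by simpa using hr0.ne')).mul ((hline (0, 1, 0)).pow 2))).add ((hline (0, 0, 1)).pow 2)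
    have hR := hL.congr_of_eventuallyEq (f₁ := (fun t => n (t, p.2.1, p.2.2)) ^ 2) (by
      filter_upwards [hev2] with t ht
      obtain ⟨-, f1, f2, f3⟩ := pd_of_differentiableAt τ _ (hτd _ ht)
      have := heik _ ht
      rw [f1, f2, f3] at this
      simpa using this.symm)
    have hE := hR.unique (hnl.pow 2)
    have hsplit : ∀ x y z : ℝ, D2 (x, y, z) (1, 0, 0) =
        x * D2 (1, 0, 0) (1, 0, 0) + y * D2 (1, 0, 0) (0, 1, 0) + z * D2 (1, 0, 0) (0, 0, 1) := by
      intro x y z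
      rw [hsym]
      have : ((x, y, z) : ℝ × ℝ × ℝ) = x • (1, 0, 0) + y • (0, 1, 0) + z • (0, 0, 1) := by
        simp
      rw [this, map_add, map_add, map_smul, map_smul, map_smul]
      simp only [smul_eq_mul]
    rw [hsplit]
    rw [← hnre] at hE
    simp only [← e1, ← e2, ← e3] at hE
    simp at hE
    rw [← e2] at hE
    generalize D2 (1, 0, 0) (1, 0, 0) = A at hE ⊢
    generalize D2 (1, 0, 0) (0, 1, 0) = B at hE ⊢
    generalize D2 (1, 0, 0) (0, 0, 1) = C at hE ⊢
    generalize pdr τ p = a at hE ⊢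
    generalize pdφ τ p = b at hE ⊢
    generalize pdz τ p = c at hE ⊢
    have hfin : a / n p ^ 2 * A + b / (p.1 ^ 2 * n p ^ 2) * B + c / n p ^ 2 * C =
        (n p * pdr n p + b ^ 2 / p.1 ^ 3) / n p ^ 2 := by
      field_simp
      field_simp at hE
      linarith
    have : 0 ≤ (n p * pdr n p + b ^ 2 / p.1 ^ 3) / n p ^ 2 := by positivity
    rw [hfin]; exact this
  have hd : ∀ s ∈ I, 0 ≤ deriv (fun t => pdr τ (rr t, pp t, zz t)) s := by
    intro s hs
    obtain ⟨d, h0, h⟩ := key s hs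
    rw [h.deriv]; exact h0
  refine ⟨hd, ?_⟩
  have hdiff : ∀ s ∈ I, DifferentiableAt ℝ (fun t => pdr τ (rr t, pp t, zz t)) s := fun s hs =>
    (key s hs).choose_spec.2.differentiableAt
  have hmono : MonotoneOn (fun t => pdr τ (rr t, pp t, zz t)) I :=
    monotoneOn_of_deriv_nonneg hI.convex
      (fun s hs => (hdiff s hs).continuousAt.continuousWithinAt)
      (fun s hs => (hdiff s (interior_subset hs)).differentiableWithinAt)
      (fun s hs => hd s (interior_subset hs))
  exact fun s₀ h₀ s hs hle => hmono h₀ hs hle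
end

section
/- (Theorem 3.1, ODE form) Let ε > 0, B > 0, z₀ ∈ (0,B), and c = ε/√(ε² + B²). Let U ⊆ {(r,φ,z) : r > 0} be open, n : U → ℝ a C¹ function with n > 0 and ∂_r n ≥ 0 on U, and τ : U → ℝ a C² solution of (∂_r τ)² + (1/r²)(∂_φ τ)² + (∂_z τ)² = n². Let γ(s) = (r(s),φ(s),z(s)), s ∈ [s*, S], be a C¹ curve in U satisfying r' = (∂_r τ ∘ γ)/(n∘γ)², φ' = (∂_φ τ ∘ γ)/(r² (n∘γ)²), z' = (∂_z τ ∘ γ)/(n∘γ)², and suppose the initial value satisfies (∂_r τ)(γ(s*)) = ε/√(ε² + (z(s*) − z₀)²) with z(s*) ∈ [0,B]. Then (∂_r τ)(γ(S)) ≥ c = ε/√(ε² + B²). -/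
open Real

lemma pdr_eq_fderiv (f : ℝ × ℝ × ℝ → ℝ) (p : ℝ × ℝ × ℝ) (h : DifferentiableAt ℝ f p) :
    HasDerivAt (fun t => f (t, p.2.1, p.2.2)) (fderiv ℝ f p (1, 0, 0)) p.1 := by
  have hc : HasDerivAt (fun t : ℝ => (t, p.2.1, p.2.2)) ((1 : ℝ), (0 : ℝ), (0 : ℝ)) p.1 :=
    (hasDerivAt_id _).prodMk ((hasDerivAt_const _ _).prodMk (hasDerivAt_const _ _))
  have h' : HasFDerivAt f (fderiv ℝ f p) ((fun t : ℝ => (t, p.2.1, p.2.2)) p.1) := h.hasFDerivAt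
  exact h'.comp_hasDerivAt p.1 hc

lemma pdφ_eq_fderiv (f : ℝ × ℝ × ℝ → ℝ) (p : ℝ × ℝ × ℝ) (h : DifferentiableAt ℝ f p) :
    pdφ f p = fderiv ℝ f p (0, 1, 0) := by
  have hc : HasDerivAt (fun t : ℝ => (p.1, t, p.2.2)) ((0 : ℝ), (1 : ℝ), (0 : ℝ)) p.2.1 :=
    (hasDerivAt_const _ _).prodMk ((hasDerivAt_id _).prodMk (hasDerivAt_const _ _))
  have h' : HasFDerivAt f (fderiv ℝ f p) ((fun t : ℝ => (p.1, t, p.2.2)) p.2.1) := h.hasFDerivAt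
  exact (h'.comp_hasDerivAt p.2.1 hc).deriv

lemma pdz_eq_fderiv (f : ℝ × ℝ × ℝ → ℝ) (p : ℝ × ℝ × ℝ) (h : DifferentiableAt ℝ f p) :
    pdz f p = fderiv ℝ f p (0, 0, 1) := by
  have hc : HasDerivAt (fun t : ℝ => (p.1, p.2.1, t)) ((0 : ℝ), (0 : ℝ), (1 : ℝ)) p.2.2 :=
    (hasDerivAt_const _ _).prodMk ((hasDerivAt_const _ _).prodMk (hasDerivAt_id _))
  have h' : HasFDerivAt f (fderiv ℝ f p) ((fun t : ℝ => (p.1, p.2.1, t)) p.2.2) := h.hasFDerivAt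
  exact (h'.comp_hasDerivAt p.2.2 hc).deriv

/-- **Theorem 3.1, ODE form.**
If along the characteristic curve `γ` on `[s*,S]` (for a refractive index `n` with
`n > 0` and `∂_r n ≥ 0`) the initial value satisfies
`(∂_r τ)(γ(s*)) = ε/√(ε² + (z(s*) − z₀)²)` with `z(s*) ∈ [0,B]`, then
`(∂_r τ)(γ(S)) ≥ ε/√(ε² + B²)`. -/
theorem theorem_3_1_ODE_form
    (ε B z₀ : ℝ) (hε : 0 < ε) (hB : 0 < B) (hz₀ : z₀ ∈ Set.Ioo 0 B)
    (U : Set (ℝ × ℝ × ℝ)) (hU : IsOpen U) (hUr : ∀ p ∈ U, 0 < p.1)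
    (n τ : ℝ × ℝ × ℝ → ℝ)
    (hn : ContDiffOn ℝ 1 n U) (hnpos : ∀ p ∈ U, 0 < n p)
    (hnr : ∀ p ∈ U, 0 ≤ pdr n p)
    (hτ : ContDiffOn ℝ 2 τ U)
    (heik : ∀ p ∈ U,
      (pdr τ p) ^ 2 + (1 / p.1 ^ 2) * (pdφ τ p) ^ 2 + (pdz τ p) ^ 2 = (n p) ^ 2)
    (sstar S : ℝ) (hsS : sstar ≤ S)
    (rr pp zz : ℝ → ℝ)
    (hγ : ∀ s ∈ Set.Icc sstar S, (rr s, pp s, zz s) ∈ U)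
    (hr' : ∀ s ∈ Set.Icc sstar S,
      HasDerivAt rr (pdr τ (rr s, pp s, zz s) / (n (rr s, pp s, zz s)) ^ 2) s)
    (hp' : ∀ s ∈ Set.Icc sstar S,
      HasDerivAt pp (pdφ τ (rr s, pp s, zz s) / ((rr s) ^ 2 * (n (rr s, pp s, zz s)) ^ 2)) s)
    (hz' : ∀ s ∈ Set.Icc sstar S,
      HasDerivAt zz (pdz τ (rr s, pp s, zz s) / (n (rr s, pp s, zz s)) ^ 2) s)
    (hzs : zz sstar ∈ Set.Icc 0 B)
    (hinit : pdr τ (rr sstar, pp sstar, zz sstar)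
      = ε / Real.sqrt (ε ^ 2 + (zz sstar - z₀) ^ 2)) :
    ε / Real.sqrt (ε ^ 2 + B ^ 2) ≤ pdr τ (rr S, pp S, zz S) := by
  have hdτ : ∀ p ∈ U, DifferentiableAt ℝ τ p := fun p hp =>
    (hτ.contDiffAt (hU.mem_nhds hp)).differentiableAt (by norm_num)
  have hdn : ∀ p ∈ U, DifferentiableAt ℝ n p := fun p hp =>
    (hn.contDiffAt (hU.mem_nhds hp)).differentiableAt (by norm_num)
  have hdD : ∀ p ∈ U, DifferentiableAt ℝ (fderiv ℝ τ) p := fun p hp =>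
    ((hτ.contDiffAt (hU.mem_nhds hp)).fderiv_right (m := 1) (by norm_num)).differentiableAt
      (by norm_num)
  have er : ∀ p ∈ U, pdr τ p = fderiv ℝ τ p (1, 0, 0) := fun p hp =>
    (pdr_eq_fderiv τ p (hdτ p hp)).deriv
  have ep : ∀ p ∈ U, pdφ τ p = fderiv ℝ τ p (0, 1, 0) := fun p hp =>
    pdφ_eq_fderiv τ p (hdτ p hp)
  have ez : ∀ p ∈ U, pdz τ p = fderiv ℝ τ p (0, 0, 1) := fun p hp =>
    pdz_eq_fderiv τ p (hdτ p hp)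
  -- the differentiated eikonal equation
  have key : ∀ p ∈ U, fderiv ℝ τ p (1, 0, 0) * fderiv ℝ (fderiv ℝ τ) p (1, 0, 0) (1, 0, 0)
      + (1 / p.1 ^ 2) * (fderiv ℝ τ p (0, 1, 0) *
          fderiv ℝ (fderiv ℝ τ) p (1, 0, 0) (0, 1, 0))
      + fderiv ℝ τ p (0, 0, 1) * fderiv ℝ (fderiv ℝ τ) p (1, 0, 0) (0, 0, 1)
      = n p * pdr n p + fderiv ℝ τ p (0, 1, 0) ^ 2 / p.1 ^ 3 := by
    intro p hp
    have hp1 := hUr p hp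
    have hc : HasDerivAt (fun t : ℝ => (t, p.2.1, p.2.2)) ((1 : ℝ), (0 : ℝ), (0 : ℝ)) p.1 :=
      (hasDerivAt_id _).prodMk ((hasDerivAt_const _ _).prodMk (hasDerivAt_const _ _))
    have hD' : HasFDerivAt (fderiv ℝ τ) (fderiv ℝ (fderiv ℝ τ) p)
      ((fun t : ℝ => (t, p.2.1, p.2.2)) p.1) := (hdD p hp).hasFDerivAt
    have hG : HasDerivAt (fun t : ℝ => fderiv ℝ τ (t, p.2.1, p.2.2))
      (fderiv ℝ (fderiv ℝ τ) p (1, 0, 0)) p.1 := hD'.comp_hasDerivAt p.1 hc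
    have hv : ∀ v : ℝ × ℝ × ℝ, HasDerivAt (fun t : ℝ => fderiv ℝ τ (t, p.2.1, p.2.2) v)
      (fderiv ℝ (fderiv ℝ τ) p (1, 0, 0) v) p.1 := by
      intro v
      simpa using hG.clm_apply (hasDerivAt_const p.1 v)
    have hN := pdr_eq_fderiv n p (hdn p hp)
    have hinv : HasDerivAt (fun t : ℝ => (t ^ 2)⁻¹) (-(2 * p.1) / (p.1 ^ 2) ^ 2) p.1 := by
      have h := (hasDerivAt_pow 2 p.1).inv (by positivity)
      simp only [Nat.cast_ofNat, Nat.add_one_sub_one, pow_one] at h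
      exact h
    have hL := (((hv (1, 0, 0)).pow 2).add (hinv.mul ((hv (0, 1, 0)).pow 2))).add
      ((hv (0, 0, 1)).pow 2)
    have hR := hN.pow 2
    have hev : ∀ᶠ t in nhds p.1, (t, p.2.1, p.2.2) ∈ U :=
      hc.continuousAt.preimage_mem_nhds (hU.mem_nhds hp)
    have hL2 := hL.congr_of_eventuallyEq (f₁ := (fun t : ℝ => n (t, p.2.1, p.2.2)) ^ 2) (by
      filter_upwards [hev] with t ht
      have := heik _ ht
      rw [er _ ht, ep _ ht, ez _ ht] at this
      simp only [one_div] at this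
      simpa using this.symm)
    have huniq := hL2.unique hR
    have hN' : pdr n p = fderiv ℝ n p (1, 0, 0) := hN.deriv
    rw [hN']
    simp only [Pi.pow_apply, Nat.cast_ofNat, Nat.add_one_sub_one, pow_one, Prod.mk.eta] at huniq
    field_simp at huniq ⊢
    linarith
  have hmono : MonotoneOn (fun s => fderiv ℝ τ (rr s, pp s, zz s) (1, 0, 0))
      (Set.Icc sstar S) := by
    have hder : ∀ s ∈ Set.Icc sstar S, ∃ d : ℝ, 0 ≤ d ∧
        HasDerivAt (fun s => fderiv ℝ τ (rr s, pp s, zz s) (1, 0, 0)) d s := by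
      intro s hs
      have hp := hγ s hs
      have hc := (hr' s hs).prodMk ((hp' s hs).prodMk (hz' s hs))
      have hG := (hdD _ hp).hasFDerivAt.comp_hasDerivAt s hc
      have hG2 := hG.clm_apply (hasDerivAt_const s ((1 : ℝ), (0 : ℝ), (0 : ℝ)))
      refine ⟨_, ?_, hG2⟩
      have hk := key _ hp
      have hnp := hnpos _ hp
      have hn0 := hnr _ hp
      have hr0 : 0 < rr s := hUr _ hp
      have hsym : IsSymmSndFDerivAt ℝ τ (rr s, pp s, zz s) :=
        (hτ.contDiffAt (hU.mem_nhds hp)).isSymmSndFDerivAt (by simp)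
      rw [er _ hp, ep _ hp, ez _ hp]
      have hrq : rr s = (rr s, pp s, zz s).1 := rfl
      have hgen : ∃ q, q = (rr s, pp s, zz s) := ⟨_, rfl⟩
      obtain ⟨q, hqe⟩ := hgen
      rw [← hqe] at hk hnp hn0 hsym hp hrq ⊢
      simp only [map_zero, add_zero]
      rw [hsym]
      have hdec : ∀ a b c : ℝ, ((a, b, c) : ℝ × ℝ × ℝ)
          = a • ((1 : ℝ), (0 : ℝ), (0 : ℝ)) + b • ((0 : ℝ), (1 : ℝ), (0 : ℝ))
            + c • ((0 : ℝ), (0 : ℝ), (1 : ℝ)) := by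
        intro a b c; simp
      rw [hdec (_ / _)]
      simp only [map_add, map_smul, smul_eq_mul]
      have hq : 0 < q.1 := hUr _ hp
      have hpos : 0 ≤ n q * pdr n q + fderiv ℝ τ q (0, 1, 0) ^ 2 / q.1 ^ 3 := by positivity
      rw [← hk] at hpos
      refine le_of_le_of_eq (div_nonneg hpos (sq_nonneg (n q))) ?_
      rw [hrq]
      field_simp
    refine monotoneOn_of_deriv_nonneg (convex_Icc _ _) ?_ ?_ ?_
    · intro s hs
      obtain ⟨d, -, h⟩ := hder s hs
      exact h.continuousAt.continuousWithinAt
    · intro s hs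
      obtain ⟨d, -, h⟩ := hder s (interior_subset hs)
      exact h.differentiableAt.differentiableWithinAt
    · intro s hs
      obtain ⟨d, hd, h⟩ := hder s (interior_subset hs)
      rwa [h.deriv]
  have hfin := hmono (Set.left_mem_Icc.2 hsS) (Set.right_mem_Icc.2 hsS) hsS
  simp only at hfin
  rw [← er _ (hγ _ (Set.left_mem_Icc.2 hsS)), ← er _ (hγ _ (Set.right_mem_Icc.2 hsS)), hinit]
    at hfin
  refine le_trans ?_ hfin
  have hsq : (zz sstar - z₀) ^ 2 ≤ B ^ 2 := by
    obtain ⟨h1, h2⟩ := hzs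
    obtain ⟨h3, h4⟩ := hz₀
    apply sq_le_sq'
    · linarith
    · linarith
  gcongr
end

section
/- (Equation (4.1) and invertibility of A_N) Let B > 0 and let {Ψ_n}_{n=0}^∞ be the orthonormal system in L²(0,B) obtained by Gram–Schmidt orthonormalization of the sequence f_n(z) = z^n e^z, so that Ψ_n(z) = P_n(z) e^z with P_n a polynomial of degree n with positive leading coefficient. Define a_{mn} = ∫₀^B Ψ_m(z) Ψ_n'(z) dz, where Ψ_n'(z) = (P_n(z) + P_n'(z)) e^z. Then a_{mn} = 1 if m = n and a_{mn} = 0 if m > n. Consequently, for every integer N ≥ 1 the matrix A_N = (a_{mn})_{m,n=0}^{N−1} satisfies det A_N = 1, and in particular A_N is invertible. -/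
open MeasureTheory Real

/-- The generating functions `z ↦ z^n e^z`. -/
noncomputable def fgen (n : ℕ) : ℝ → ℝ := fun z => z ^ n * Real.exp z

theorem aux_orth (B : ℝ) (Ψ : ℕ → ℝ → ℝ) (P : ℕ → Polynomial ℝ)
    (hform : ∀ n : ℕ, Ψ n = fun z => (P n).eval z * Real.exp z)
    (hdeg : ∀ n : ℕ, (P n).degree = n)
    (horth : ∀ m n : ℕ,
      ∫ z in (0 : ℝ)..B, Ψ m z * Ψ n z = if m = n then 1 else 0)
    (m k : ℕ) (hk : k ≤ m) (Q : Polynomial ℝ) (hQ : Q.degree < k) :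
    ∫ z in (0 : ℝ)..B, Ψ m z * (Q.eval z * Real.exp z) = 0 := by
  induction k generalizing Q with
  | zero =>
    have : Q = 0 := by
      rw [← Polynomial.degree_eq_bot]
      simpa using hQ
    simp [this]
  | succ k ih =>
    have hnd : (P k).natDegree = k := Polynomial.natDegree_eq_of_degree_eq_some (hdeg k)
    have hne : (P k).coeff k ≠ 0 := Polynomial.coeff_ne_zero_of_eq_degree (hdeg k)
    have hc : ∀ R : Polynomial ℝ, Continuous fun z => Ψ m z * (R.eval z * Real.exp z) := by
      intro R
      rw [hform]
      have h1 := R.continuous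
      have h2 := (P m).continuous
      fun_prop
    set c := Q.coeff k / (P k).coeff k with hcdef
    have hlt : (Q - Polynomial.C c * P k).degree < k := by
      rw [Polynomial.degree_lt_iff_coeff_zero]
      rw [Polynomial.degree_lt_iff_coeff_zero] at hQ
      intro j hj
      rw [Polynomial.coeff_sub, Polynomial.coeff_C_mul]
      rcases hj.eq_or_lt with rfl | h
      · rw [hcdef]; field_simp; ring
      · rw [hQ j h, Polynomial.coeff_eq_zero_of_natDegree_lt (by omega)]; ring
    have h0 := ih (by omega) _ hlt
    have ho := horth m k
    rw [if_neg (by omega)] at ho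
    have key : (fun z => Ψ m z * (Q.eval z * Real.exp z)) = fun z =>
        Ψ m z * ((Q - Polynomial.C c * P k).eval z * Real.exp z) + c * (Ψ m z * Ψ k z) := by
      funext z
      simp only [hform k, Polynomial.eval_sub, Polynomial.eval_mul, Polynomial.eval_C]
      ring
    have hc2 : Continuous fun z => Ψ m z * Ψ k z := by
      have := hc (P k)
      rwa [hform k]
    rw [key, intervalIntegral.integral_add ((hc _).intervalIntegrable _ _)
      ((hc2.const_mul c).intervalIntegrable _ _), h0, intervalIntegral.integral_const_mul, ho]
    simp

/-- **Equation (4.1) and invertibility of `A_N`.**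
Let `{Ψₙ}` be the Gram–Schmidt orthonormalization of `fₙ(z) = zⁿ e^z` in `L²(0,B)`,
with `Ψₙ(z) = Pₙ(z) e^z`, `deg Pₙ = n`, leading coefficient of `Pₙ` positive.
Define `a_{mn} = ∫₀^B Ψₘ(z) Ψₙ'(z) dz`, where `Ψₙ'(z) = (Pₙ(z) + Pₙ'(z)) e^z`.
Then `a_{nn} = 1`, `a_{mn} = 0` for `m > n`, and for every `N ≥ 1` the matrix
`A_N = (a_{mn})_{m,n=0}^{N−1}` has `det A_N = 1`; in particular `A_N` is invertible. -/
theorem matrix_AN_det_one_and_invertible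
    (B : ℝ) (hB : 0 < B) (Ψ : ℕ → ℝ → ℝ) (P : ℕ → Polynomial ℝ)
    (hform : ∀ n : ℕ, Ψ n = fun z => (P n).eval z * Real.exp z)
    (hdeg : ∀ n : ℕ, (P n).degree = n)
    (hlead : ∀ n : ℕ, 0 < (P n).leadingCoeff)
    (horth : ∀ m n : ℕ,
      ∫ z in (0 : ℝ)..B, Ψ m z * Ψ n z = if m = n then 1 else 0)
    (hspan : ∀ n : ℕ,
      Submodule.span ℝ (Ψ '' Set.Iic n) = Submodule.span ℝ (fgen '' Set.Iic n))
    (a : ℕ → ℕ → ℝ)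
    (ha : ∀ m n : ℕ, a m n =
      ∫ z in (0 : ℝ)..B,
        Ψ m z * (((P n).eval z + ((Polynomial.derivative (P n)).eval z)) * Real.exp z)) :
    (∀ n : ℕ, a n n = 1)
    ∧ (∀ m n : ℕ, n < m → a m n = 0)
    ∧ ∀ N : ℕ, 1 ≤ N →
        Matrix.det (Matrix.of fun i j : Fin N => a i j) = 1
        ∧ IsUnit (Matrix.of fun i j : Fin N => a i j) := by
  have hc : ∀ m, ∀ R : Polynomial ℝ, Continuous fun z => Ψ m z * (R.eval z * Real.exp z) := by
    intro m R
    rw [hform]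
    have h1 := R.continuous
    have h2 := (P m).continuous
    fun_prop
  have hadd : ∀ m n, a m n = (if m = n then 1 else 0) +
      ∫ z in (0 : ℝ)..B, Ψ m z * ((Polynomial.derivative (P n)).eval z * Real.exp z) := by
    intro m n
    rw [ha, ← horth m n, hform n, ← intervalIntegral.integral_add
      ((hc m (P n)).intervalIntegrable _ _) ((hc m _).intervalIntegrable _ _)]
    congr 1
    funext z
    ring
  have hd : ∀ n, (Polynomial.derivative (P n)).degree < (n : WithBot ℕ) := by
    intro n
    rw [← hdeg n]
    refine Polynomial.degree_derivative_lt ?_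
    intro h
    have := hlead n
    simp [h] at this
  have hz : ∀ m n, n ≤ m →
      ∫ z in (0 : ℝ)..B, Ψ m z * ((Polynomial.derivative (P n)).eval z * Real.exp z) = 0 :=
    fun m n h => aux_orth B Ψ P hform hdeg horth m n h _ (hd n)
  have h1 : ∀ n : ℕ, a n n = 1 := by
    intro n
    rw [hadd, hz n n le_rfl]; simp
  have h2 : ∀ m n : ℕ, n < m → a m n = 0 := by
    intro m n h
    rw [hadd, hz m n h.le, if_neg (by omega)]; simp
  refine ⟨h1, h2, fun N _ => ?_⟩
  have hdet : Matrix.det (Matrix.of fun i j : Fin N => a i j) = 1 := by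
    rw [Matrix.det_of_upperTriangular]
    · simp [h1]
    · intro i j hij
      exact h2 _ _ hij
  refine ⟨hdet, ?_⟩
  rw [Matrix.isUnit_iff_isUnit_det, hdet]
  exact isUnit_one
end
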